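/- arXiv:1406.5589 — 5 statements merged into one kernel-verified Lean document; each statement's English description precedes it below -/
import Mathlib

section
/- For any melody x = (x_1,…,x_{n+1}) of real numbers (n ≥ 1) with D(x) ≠ 0 and any real number t, the transposed inversion x^i + t = (−x_1+t,…,−x_{n+1}+t) satisfies D(x^i + t) ≠ 0 and s(x^i + t) = s(x). -/
/-! `N` and `D` are `n²` times the covariance of `(xᵢ)` with `(xᵢ₊₁)` and the variance of `(xᵢ)`.
Both are quadratic and insensitive to adding a constant, so each is individually invariant under
`x ↦ -x + t`; the slope, their quotient, is then invariant as well. -/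

open Finset

/-- The numerator `N(x) = n·∑ xᵢxᵢ₊₁ − (∑_{i=1}^n xᵢ)(∑_{i=2}^{n+1} xᵢ)` of the
least-squares slope of the M-graph of the melody `x = (x_1, …, x_{n+1})`
(indexed here as `x 0, …, x n`). -/
noncomputable def melN (n : ℕ) (x : ℕ → ℝ) : ℝ :=
  n * ∑ i ∈ Finset.range n, x i * x (i + 1) -
    (∑ i ∈ Finset.range n, x i) * (∑ i ∈ Finset.range n, x (i + 1))

/-- The denominator `D(x) = n·∑_{i=1}^n xᵢ² − (∑_{i=1}^n xᵢ)²` of the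
least-squares slope of the M-graph of the melody `x = (x_1, …, x_{n+1})`. -/
noncomputable def melD (n : ℕ) (x : ℕ → ℝ) : ℝ :=
  n * ∑ i ∈ Finset.range n, (x i) ^ 2 - (∑ i ∈ Finset.range n, x i) ^ 2

/-- The slope `s(x) = N(x)/D(x)` of the M-graph of the melody `x`. -/
noncomputable def melS (n : ℕ) (x : ℕ → ℝ) : ℝ := melN n x / melD n x

/-- Inversion and transposition multiply both arguments of the covariance form `N` by `-1`
and shift them, so `N` is unchanged. -/
theorem melN_inversion_transpose (n : ℕ) (x : ℕ → ℝ) (t : ℝ) :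
    melN n (fun i => -x i + t) = melN n x := by
  have h : ∑ i ∈ Finset.range n, (-x i + t) * (-x (i + 1) + t) =
      ∑ i ∈ Finset.range n, x i * x (i + 1) - t * ∑ i ∈ Finset.range n, x i
        - t * ∑ i ∈ Finset.range n, x (i + 1) + n * t ^ 2 := by
    have hc : (n : ℝ) * t ^ 2 = ∑ _i ∈ Finset.range n, t ^ 2 := by simp
    rw [hc, Finset.mul_sum, Finset.mul_sum, ← Finset.sum_sub_distrib,
      ← Finset.sum_sub_distrib, ← Finset.sum_add_distrib]
    exact Finset.sum_congr rfl fun i _ => by ring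
  simp only [melN, h, Finset.sum_add_distrib, Finset.sum_neg_distrib, Finset.sum_const,
    Finset.card_range, nsmul_eq_mul]
  ring

theorem melD_inversion_transpose (n : ℕ) (x : ℕ → ℝ) (t : ℝ) :
    melD n (fun i => -x i + t) = melD n x := by
  have h : ∑ i ∈ Finset.range n, (-x i + t) ^ 2 =
      ∑ i ∈ Finset.range n, x i ^ 2 - 2 * t * ∑ i ∈ Finset.range n, x i + n * t ^ 2 := by
    have hc : (n : ℝ) * t ^ 2 = ∑ _i ∈ Finset.range n, t ^ 2 := by simp
    rw [hc, Finset.mul_sum, ← Finset.sum_sub_distrib, ← Finset.sum_add_distrib]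
    exact Finset.sum_congr rfl fun i _ => by ring
  simp only [melD, h, Finset.sum_add_distrib, Finset.sum_neg_distrib, Finset.sum_const,
    Finset.card_range, nsmul_eq_mul]
  ring

/-- The slope of the M-graph is invariant under inversion followed by transposition. -/
theorem melS_inversion_transpose (n : ℕ) (hn : 1 ≤ n) (x : ℕ → ℝ) (hD : melD n x ≠ 0)
    (t : ℝ) :
    melD n (fun i => -x i + t) ≠ 0 ∧ melS n (fun i => -x i + t) = melS n x := by
  rw [melS, melS, melN_inversion_transpose, melD_inversion_transpose]
  exact ⟨hD, rfl⟩
end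

section
/- For any melody x = (x_1,…,x_{n+1}) of real numbers (n ≥ 1), the retrograde x^r = (x_{n+1},…,x_1) satisfies the identity D(x^r) − D(x) = (x_{n+1} − x_1)·((n+1)(x_{n+1} + x_1) − 2·∑_{i=1}^{n+1} x_i). -/
open Finset

/-- Reversing `f 0, …, f n` and dropping the last term loses `f 0` in place of `f n`. -/
lemma sum_range_sub_eq (n : ℕ) (f : ℕ → ℝ) :
    ∑ i ∈ Finset.range n, f (n - i) = ∑ i ∈ Finset.range n, f i + f n - f 0 := by
  have h := Finset.sum_range_reflect f (n + 1)
  simp only [Nat.add_sub_cancel] at h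
  rw [Finset.sum_range_succ, Finset.sum_range_succ, Nat.sub_self] at h
  linarith

/-- The identity for the change of the denominator `D` under retrograde. -/
theorem melD_retrograde_sub (n : ℕ) (hn : 1 ≤ n) (x : ℕ → ℝ) :
    melD n (fun i => x (n - i)) - melD n x =
      (x n - x 0) * ((n + 1 : ℝ) * (x n + x 0) - 2 * ∑ i ∈ Finset.range (n + 1), x i) := by
  have h1 := sum_range_sub_eq n x
  have h2 := sum_range_sub_eq n (fun i => x i ^ 2)
  simp only [melD]
  rw [h1, h2, Finset.sum_range_succ]
  ring
end

section
/- For any melody x = (x_1,…,x_{n+1}) of real numbers (n ≥ 1), the retrograde x^r = (x_{n+1},…,x_1) satisfies D(x^r) = D(x) if and only if x_1 = x_{n+1} or (n+1)(x_{n+1} + x_1) = 2·∑_{i=1}^{n+1} x_i. -/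
/-!
With `S` and `Q` the sums of all `n + 1` notes and of their squares, `D(x)` omits the last
note and `D(xʳ)` the first, so `D(x) = n (Q - x_n²) - (S - x_n)²` and
`D(xʳ) = n (Q - x_0²) - (S - x_0)²`. Their difference factors as
`D(xʳ) - D(x) = (x_n - x_0) ((n + 1) (x_n + x_0) - 2 S)`.
-/

open Finset

/-- The denominator `D` is invariant under retrograde iff the melody begins and ends
with the same note, or `(n+1)(x_{n+1} + x_1) = 2 ∑ x_i`. -/
theorem melD_retrograde_iff (n : ℕ) (hn : 1 ≤ n) (x : ℕ → ℝ) :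
    melD n (fun i => x (n - i)) = melD n x ↔
      x 0 = x n ∨ (n + 1 : ℝ) * (x n + x 0) = 2 * ∑ i ∈ Finset.range (n + 1), x i := by
  have hsum (f : ℕ → ℝ) :
      ∑ i ∈ Finset.range n, f (n - i) = (∑ i ∈ Finset.range (n + 1), f i) - f 0 := by
    have h := Finset.sum_range_reflect f (n + 1)
    rw [Finset.sum_range_succ] at h
    simp only [Nat.add_sub_cancel, Nat.sub_self] at h
    linarith
  have key : melD n (fun i => x (n - i)) - melD n x =
      (x n - x 0) *
        ((n + 1 : ℝ) * (x n + x 0) - 2 * ∑ i ∈ Finset.range (n + 1), x i) := by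
    simp only [melD]
    rw [hsum x, hsum (fun i => x i ^ 2)]
    simp only [Finset.sum_range_succ]
    ring
  rw [← sub_eq_zero, key, mul_eq_zero, sub_eq_zero, sub_eq_zero, eq_comm (a := x n)]
end

section
/- Let x = (x_1,…,x_{n+1}) be a melody of real numbers (n ≥ 1) that begins and ends with the same note, i.e., x_1 = x_{n+1}, and suppose D(x) ≠ 0. Then the retrograde x^r = (x_{n+1},…,x_1) satisfies D(x^r) ≠ 0 and s(x^r) = s(x); i.e., a melody and its retrograde have the same slope. -/
/-!
Reversing the index of summation turns the sums over the first `n` notes of the retrograde into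
the sums over the last `n` notes of `x`, and fixes the sum of products of consecutive notes, so `N`
is invariant under retrograde for every melody. Since `x 0 = x n`, the first `n` notes and the last
`n` notes of `x` have the same sum of values and the same sum of squares, so `D` is invariant too.
-/

open Finset

/-- The first `n` terms of the reversed sequence are the last `n` terms of the original. -/
theorem sum_retrograde (n : ℕ) (f : ℕ → ℝ) :
    ∑ i ∈ Finset.range n, f (n - i) = ∑ i ∈ Finset.range n, f (i + 1) := by
  rw [← Finset.sum_range_reflect (fun i => f (i + 1)) n]
  refine Finset.sum_congr rfl fun i hi => ?_
  have := Finset.mem_range.mp hi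
  congr 1
  omega

theorem sum_retrograde_succ (n : ℕ) (f : ℕ → ℝ) :
    ∑ i ∈ Finset.range n, f (n - (i + 1)) = ∑ i ∈ Finset.range n, f i := by
  rw [← Finset.sum_range_reflect f n]
  refine Finset.sum_congr rfl fun i hi => ?_
  congr 1
  omega

theorem sum_shift_of_eq (n : ℕ) (f : ℕ → ℝ) (h : f 0 = f n) :
    ∑ i ∈ Finset.range n, f (i + 1) = ∑ i ∈ Finset.range n, f i := by
  have h₁ := Finset.sum_range_succ f n
  have h₂ := Finset.sum_range_succ' f n
  linarith

/-- The numerator is invariant under retrograde, without any condition on the end notes. -/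
theorem melN_retrograde (n : ℕ) (x : ℕ → ℝ) : melN n (fun i => x (n - i)) = melN n x := by
  have hprod : ∑ i ∈ Finset.range n, x (n - i) * x (n - (i + 1)) =
      ∑ i ∈ Finset.range n, x i * x (i + 1) := by
    rw [← sum_retrograde_succ n (fun i => x i * x (i + 1))]
    refine Finset.sum_congr rfl fun i hi => ?_
    have := Finset.mem_range.mp hi
    have hidx : n - (i + 1) + 1 = n - i := by omega
    simp only [hidx, mul_comm]
  simp only [melN]
  rw [hprod, sum_retrograde n x, sum_retrograde_succ n x, mul_comm (∑ i ∈ Finset.range n, x i)]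

theorem melD_retrograde (n : ℕ) (x : ℕ → ℝ) (hx : x 0 = x n) :
    melD n (fun i => x (n - i)) = melD n x := by
  simp only [melD]
  rw [sum_retrograde n x, sum_shift_of_eq n x hx, sum_retrograde n (fun i => x i ^ 2),
    sum_shift_of_eq n (fun i => x i ^ 2) (by simp only [hx])]

/-- A melody beginning and ending with the same note has the same slope as its retrograde. -/
theorem melS_retrograde (n : ℕ) (hn : 1 ≤ n) (x : ℕ → ℝ) (hx : x 0 = x n)
    (hD : melD n x ≠ 0) :
    melD n (fun i => x (n - i)) ≠ 0 ∧ melS n (fun i => x (n - i)) = melS n x := by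
  have hd := melD_retrograde n x hx
  exact ⟨hd ▸ hD, by rw [melS, melS, hd, melN_retrograde]⟩
end

section
/- Let x = (x_1,x_2,x_3,x_4) be a melody of real numbers and set y_i = x_{i+1} − x_i for i = 1,2,3. Assume y_1 ≠ 0, y_2 ≠ 0, and D(x) ≠ 0, and let s_1 = y_2/y_1 and s_2 = y_3/y_2 be the local slopes. Then s(x) = (s_1² + 2s_1 + s_1 s_2 + 2 s_1² s_2) / (2(1 + s_1 + s_1²)); in particular the slope of a length-4 melody is a rational function of the slopes of its consecutive three-note submelodies. -/
/-!
Both `N` and `D` are translation invariant and quadratic, hence quadratic forms in the differences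
`yᵢ = x_{i+1} − x_i`: for four notes, `D = 2(y₁² + y₁y₂ + y₂²)` and
`N = y₂² + 2y₁y₂ + y₁y₃ + 2y₂y₃`. Factoring `y₁²` out of each leaves polynomials in
`s₁ = y₂/y₁` and `s₂ = y₃/y₂`, and the common factor `y₁²` cancels in the quotient.
-/

open Finset

/-- The slope of a four-note melody is a rational function of the local slopes
`s₁ = y₂/y₁`, `s₂ = y₃/y₂` of its consecutive three-note submelodies, where
`yᵢ = x_{i+1} − x_i`. -/
theorem melS_of_local_slopes (x : ℕ → ℝ)
    (hy1 : x 1 - x 0 ≠ 0) (hy2 : x 2 - x 1 ≠ 0) (hD : melD 3 x ≠ 0) :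
    melS 3 x =
      ((((x 2 - x 1) / (x 1 - x 0)) ^ 2 + 2 * ((x 2 - x 1) / (x 1 - x 0)) +
          ((x 2 - x 1) / (x 1 - x 0)) * ((x 3 - x 2) / (x 2 - x 1)) +
          2 * ((x 2 - x 1) / (x 1 - x 0)) ^ 2 * ((x 3 - x 2) / (x 2 - x 1))) /
        (2 * (1 + ((x 2 - x 1) / (x 1 - x 0)) + ((x 2 - x 1) / (x 1 - x 0)) ^ 2))) := by
  have hN' : melN 3 x = (x 1 - x 0) ^ 2 *
      (((x 2 - x 1) / (x 1 - x 0)) ^ 2 + 2 * ((x 2 - x 1) / (x 1 - x 0)) +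
          ((x 2 - x 1) / (x 1 - x 0)) * ((x 3 - x 2) / (x 2 - x 1)) +
          2 * ((x 2 - x 1) / (x 1 - x 0)) ^ 2 * ((x 3 - x 2) / (x 2 - x 1))) := by
    simp only [melN, Finset.sum_range_succ, Finset.sum_range_zero]
    field_simp
    push_cast
    ring
  have hD' : melD 3 x = (x 1 - x 0) ^ 2 *
      (2 * (1 + ((x 2 - x 1) / (x 1 - x 0)) + ((x 2 - x 1) / (x 1 - x 0)) ^ 2)) := by
    simp only [melD, Finset.sum_range_succ, Finset.sum_range_zero]
    field_simp
    push_cast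
    ring
  rw [melS, hN', hD', mul_div_mul_left _ _ (pow_ne_zero 2 hy1)]
end
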